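/- The kneading group K is level-transitive: for every m ∈ ℕ and all v, w ∈ ℤ^m there exists g ∈ K with g(v) = w. -/

import Mathlib

/-- States of the kneading automaton: `a i` is the paper's `a_{i+1}` (for `i < k`),
`b i` is the paper's `b_{i+1}` (for `i < p`), and `id` is the identity state. -/
inductive KState : Type
  | a (i : ℕ)
  | b (i : ℕ)
  | id
  deriving DecidableEq

/-- Transition function of the kneading automaton `𝒦(x₁…x_k, y₁…y_p)`, where the paper's
`x_i` is `x (i-1)` and `y_i` is `y (i-1)`.  `KTrans k p x y s z = (output letter, restriction)`. -/
def KTrans (k p : ℕ) (x y : ℕ → ℤ) : KState → ℤ → ℤ × KState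
  | .a 0, z => (z + 1, .id)
  | .a (i+1), z => if z = x i then (z, .a i) else (z, .id)
  | .b 0, z =>
      if z = x (k-1) then (z, .a (k-1))
      else if z = y (p-1) then (z, .b (p-1))
      else (z, .id)
  | .b (i+1), z => if z = y i then (z, .b i) else (z, .id)
  | .id, z => (z, .id)

/-- The action of a state on the tree `ℤ*` of finite words over `ℤ`,
defined recursively by `q(zv) = q(z)·(q|_z)(v)`. -/
def stateAct (k p : ℕ) (x y : ℕ → ℤ) : KState → List ℤ → List ℤ
  | _, [] => []
  | s, z :: v => (KTrans k p x y s z).1 :: stateAct k p x y (KTrans k p x y s z).2 v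

/-- The generating states `S = {a₁,…,a_k, b₁,…,b_p}`. -/
def IsGen (k p : ℕ) (s : KState) : Prop :=
  (∃ i, i < k ∧ s = .a i) ∨ (∃ j, j < p ∧ s = .b j)

/-- The generators of the kneading group, as permutations of `List ℤ` whose underlying
function is the action of a generating state. -/
def SGens (k p : ℕ) (x y : ℕ → ℤ) : Set (Equiv.Perm (List ℤ)) :=
  {g | ∃ s : KState, IsGen k p s ∧ ⇑g = stateAct k p x y s}

/-- The kneading group `K = 𝕂(x₁…x_k, y₁…y_p)`. -/
def Kgroup (k p : ℕ) (x y : ℕ → ℤ) : Subgroup (Equiv.Perm (List ℤ)) :=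
  Subgroup.closure (SGens k p x y)

/-!
The powers of `a₁` change the first letter of a word arbitrarily and leave the rest alone. Every
generator is the restriction of some generator at a letter that the latter fixes: `b₁` restricts to
`a_k` at `x_k` and to `b_p` at `y_p ≠ x_k`, and the other cases follow the chains of the automaton.
Hence `z v` and `z s(v)` lie in the same orbit for every generator `s` and every letter `z`, and by
induction on the level the orbit of a word depends only on its length.
-/

open MulAction

theorem apply_smul_eq_of_mem_closure {G X Y : Type*} [Group G] [MulAction G X] {S : Set G}
    {f : X → Y} (hf : ∀ g ∈ S, ∀ a, f (g • a) = f a) {g : G} (hg : g ∈ Subgroup.closure S)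
    (a : X) : f (g • a) = f a := by
  induction hg using Subgroup.closure_induction generalizing a with
  | mem g hg => exact hf g hg a
  | one => rw [one_smul]
  | mul g h _ _ ihg ihh => rw [mul_smul, ihg, ihh]
  | inv g _ ih => rw [← ih, smul_inv_smul]

theorem orbit_closure_eq_of_length_eq {A : Type*} {S : Set (Equiv.Perm (List A))}
    (head : ∀ (z z' : A) (v : List A),
      orbit (Subgroup.closure S) (z :: v) = orbit (Subgroup.closure S) (z' :: v))
    (tail : ∀ g ∈ S, ∃ c : A, ∀ v : List A,
      orbit (Subgroup.closure S) (c :: g v) = orbit (Subgroup.closure S) (c :: v))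
    {v w : List A} (h : v.length = w.length) :
    orbit (Subgroup.closure S) v = orbit (Subgroup.closure S) w := by
  have tail_any (z : A) (g) (hg : g ∈ S) (v : List A) :
      orbit (Subgroup.closure S) (z :: g • v) = orbit (Subgroup.closure S) (z :: v) := by
    obtain ⟨c, hc⟩ := tail g hg
    exact (head z c _).trans ((hc v).trans (head c z v))
  induction v generalizing w with
  | nil => rw [List.length_eq_zero_iff.mp h.symm]
  | cons z v ih =>
    obtain ⟨z', w, rfl⟩ := List.exists_cons_of_length_eq_add_one h.symm
    obtain ⟨⟨g, hg⟩, rfl⟩ := orbit_eq_iff.mp (ih (Nat.succ.inj h))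
    calc orbit (Subgroup.closure S) (z :: g • w)
        = orbit (Subgroup.closure S) (z :: w) :=
          apply_smul_eq_of_mem_closure (f := fun u => orbit _ (z :: u)) (tail_any z) hg w
      _ = orbit (Subgroup.closure S) (z' :: w) := head z z' w

section Kneading

variable {k p : ℕ} {x y : ℕ → ℤ}

theorem KTrans_fst_eq_self {s : KState} (hs : s ≠ .a 0) (z : ℤ) : (KTrans k p x y s z).1 = z := by
  rcases s with (_ | i) | (_ | i) | _ <;> grind [KTrans]

theorem KTrans_fst_bijective (s : KState) :
    Function.Bijective fun z => (KTrans k p x y s z).1 := by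
  by_cases hs : s = .a 0
  · subst hs
    exact (Equiv.addRight (1 : ℤ)).bijective
  · simp only [KTrans_fst_eq_self hs]
    exact Function.bijective_id

theorem stateAct_injective (s : KState) : Function.Injective (stateAct k p x y s) := by
  intro v w h
  induction v generalizing s w with
  | nil => cases w <;> simp_all [stateAct]
  | cons z v ih =>
    cases w with
    | nil => simp [stateAct] at h
    | cons z' w =>
      obtain ⟨hhead, htail⟩ := List.cons.inj h
      obtain rfl : z = z' := (KTrans_fst_bijective s).injective hhead
      rw [ih _ htail]

theorem stateAct_surjective (s : KState) : Function.Surjective (stateAct k p x y s) := by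
  intro w
  induction w generalizing s with
  | nil => exact ⟨[], rfl⟩
  | cons z w ih =>
    obtain ⟨z', rfl⟩ : ∃ z', (KTrans k p x y s z').1 = z := (KTrans_fst_bijective s).surjective z
    obtain ⟨v, rfl⟩ := ih (KTrans k p x y s z').2
    exact ⟨z' :: v, rfl⟩

theorem stateAct_id (v : List ℤ) : stateAct k p x y .id v = v := by
  induction v with
  | nil => rfl
  | cons z v ih => exact congrArg (z :: ·) ih

theorem orbit_stateAct {s : KState} (hs : IsGen k p s) (v : List ℤ) :
    orbit (Kgroup k p x y) (stateAct k p x y s v) = orbit (Kgroup k p x y) v := by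
  let g : Equiv.Perm (List ℤ) :=
    Equiv.ofBijective (stateAct k p x y s) ⟨stateAct_injective s, stateAct_surjective s⟩
  have hg : g ∈ Kgroup k p x y := Subgroup.subset_closure ⟨s, hs, rfl⟩
  exact orbit_smul (⟨g, hg⟩ : Kgroup k p x y) v

theorem orbit_cons_eq_orbit_cons (hk : 1 ≤ k) (z z' : ℤ) (v : List ℤ) :
    orbit (Kgroup k p x y) (z :: v) = orbit (Kgroup k p x y) (z' :: v) := by
  have periodic : Function.Periodic (fun z => orbit (Kgroup k p x y) (z :: v)) (1 : ℤ) := by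
    intro z
    have h := orbit_stateAct (x := x) (y := y) (p := p) (Or.inl ⟨0, hk, rfl⟩) (z :: v)
    rwa [stateAct, KTrans, stateAct_id] at h
  have eq_zero (z : ℤ) : orbit (Kgroup k p x y) (z :: v) = orbit (Kgroup k p x y) (0 :: v) := by
    simpa using periodic.int_mul_eq z
  rw [eq_zero z, eq_zero z']

theorem IsGen.exists_KTrans_eq (hp : 1 ≤ p) (hxy : x (k - 1) ≠ y (p - 1)) {s : KState}
    (hs : IsGen k p s) : ∃ t c, IsGen k p t ∧ KTrans k p x y t c = (c, s) := by
  rcases hs with ⟨i, hi, rfl⟩ | ⟨i, hi, rfl⟩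
  · by_cases hnext : i + 1 < k
    · exact ⟨.a (i + 1), x i, Or.inl ⟨_, hnext, rfl⟩, by simp [KTrans]⟩
    · obtain rfl : i = k - 1 := by lia
      exact ⟨.b 0, x (k - 1), Or.inr ⟨_, hp, rfl⟩, by simp [KTrans]⟩
  · by_cases hnext : i + 1 < p
    · exact ⟨.b (i + 1), y i, Or.inr ⟨_, hnext, rfl⟩, by simp [KTrans]⟩
    · obtain rfl : i = p - 1 := by lia
      exact ⟨.b 0, y (p - 1), Or.inr ⟨_, hp, rfl⟩, by simp [KTrans, hxy.symm]⟩

theorem exists_orbit_cons_stateAct_eq (hp : 1 ≤ p) (hxy : x (k - 1) ≠ y (p - 1)) {s : KState}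
    (hs : IsGen k p s) : ∃ c, ∀ v,
      orbit (Kgroup k p x y) (c :: stateAct k p x y s v) = orbit (Kgroup k p x y) (c :: v) := by
  obtain ⟨t, c, ht, htc⟩ := hs.exists_KTrans_eq hp hxy
  refine ⟨c, fun v => ?_⟩
  have h := orbit_stateAct (x := x) (y := y) ht (c :: v)
  rwa [stateAct, htc] at h

end Kneading

theorem stmt7 (k p : ℕ) (hk : 1 ≤ k) (hp : 1 ≤ p) (x y : ℕ → ℤ)
    (hxy : x (k - 1) ≠ y (p - 1)) :
    ∀ (m : ℕ) (v w : List ℤ), v.length = m → w.length = m →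
      ∃ g ∈ Kgroup k p x y, g v = w := by
  intro m v w hv hw
  have tail : ∀ g ∈ SGens k p x y, ∃ c, ∀ u,
      orbit (Kgroup k p x y) (c :: g u) = orbit (Kgroup k p x y) (c :: u) := by
    rintro g ⟨s, hs, hg⟩
    simpa only [hg] using exists_orbit_cons_stateAct_eq hp hxy hs
  have horbit : orbit (Kgroup k p x y) w = orbit (Kgroup k p x y) v :=
    orbit_closure_eq_of_length_eq (orbit_cons_eq_orbit_cons hk) tail (hw.trans hv.symm)
  obtain ⟨⟨g, hg⟩, hgv⟩ := orbit_eq_iff.mp horbit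
  exact ⟨g, hg, hgv⟩
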